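/- Let -1/2 < s₀ ≤ 0, let 2 ≤ p ≤ 4, and let s ≤ 0 satisfy s < -1 + 2/p. Then there exists b₁ > 1/2 such that for every b with 1/2 < b < b₁ and every Schwartz function ψ : ℝ → ℂ there is a constant C > 0 with the following property: for every sequence α : ℤ → ℂ with ∑_{k∈ℤ} ⟨k⟩^{s₀p} |α_k|^p < ∞, defining for q ∈ ℤ and τ ∈ ℝ the quantity ĉ_q(τ) = ∑_{n∈ℤ} conj(α_n) · conj(α_{-n-q}) · ψ̂(τ - n² - (n+q)²), one has ∑_{q∈ℤ} ∫_ℝ ⟨τ + q²⟩^{2(b-1)} ⟨q⟩^{2s} |ĉ_q(τ)|² dτ ≤ C (∑_{k∈ℤ} ⟨k⟩^{s₀p} |α_k|^p)^{4/p}. -/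

import Mathlib

/-- The Japanese bracket `⟨x⟩ = (1 + x²)^{1/2}`. -/
noncomputable def jb (x : ℝ) : ℝ := Real.sqrt (1 + x ^ 2)

/-- The time-Fourier transform `ψ̂(τ) = ∫_ℝ e^{-iτt} ψ(t) dt`. -/
noncomputable def ft (ψ : ℝ → ℂ) (τ : ℝ) : ℂ :=
  ∫ t : ℝ, Complex.exp (-Complex.I * (τ : ℂ) * (t : ℂ)) * ψ t


open MeasureTheory

lemma jb_one_le (x : ℝ) : 1 ≤ jb x := by
  unfold jb; rw [Real.one_le_sqrt]; nlinarith [sq_nonneg x]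

lemma jb_pos (x : ℝ) : 0 < jb x := lt_of_lt_of_le one_pos (jb_one_le x)

lemma jb_sq (x : ℝ) : jb x ^ 2 = 1 + x ^ 2 := by
  unfold jb; exact Real.sq_sqrt (by positivity)

lemma ft_decay (ψ : SchwartzMap ℝ ℂ) :
    ∃ D : ℝ, 0 < D ∧ ∀ x, ‖ft (⇑ψ) x‖ ≤ D * ((1 + x ^ 2)⁻¹) ^ 2 := by
  obtain ⟨C0, hC0, h0⟩ := (FourierTransform.fourier ψ).decay 0 0
  obtain ⟨C4, hC4, h4⟩ := (FourierTransform.fourier ψ).decay 4 0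
  refine ⟨2 * (C0 + (2 * Real.pi) ^ 4 * C4), by positivity, fun x => ?_⟩
  have hx : ft (⇑ψ) x = FourierTransform.fourier ψ (x / (2 * Real.pi)) := by
    rw [SchwartzMap.fourier_coe, Real.fourier_real_eq_integral_exp_smul]
    unfold ft
    congr 1
    ext t
    rw [smul_eq_mul]
    congr 2
    push_cast
    have : (Real.pi : ℂ) ≠ 0 := by exact_mod_cast Real.pi_ne_zero
    field_simp
  have a0 := h0 (x / (2 * Real.pi))
  have a4 := h4 (x / (2 * Real.pi))
  simp only [norm_iteratedFDeriv_zero, pow_zero, one_mul] at a0 a4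
  rw [← hx] at a0 a4
  have hpi := Real.pi_pos
  have e4 : ‖x / (2 * Real.pi)‖ ^ 4 = x ^ 4 / (2 * Real.pi) ^ 4 := by
    rw [norm_div, div_pow, Real.norm_eq_abs, Real.norm_eq_abs, abs_of_pos (by positivity : 0 < 2 * Real.pi)]
    congr 1
    exact Even.pow_abs (by decide) x
  rw [e4, div_mul_eq_mul_div, div_le_iff₀ (by positivity)] at a4
  rw [inv_pow, ← div_eq_mul_inv, le_div_iff₀ (by positivity)]
  have hn := norm_nonneg (ft (⇑ψ) x)
  nlinarith [mul_nonneg hn (sq_nonneg (x ^ 2 - 1))]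

lemma sum_shift (u : ℝ) :
    ∑' n : ℤ, ENNReal.ofReal ((1 + ((n : ℝ) + u) ^ 2)⁻¹) ≤
      3 * ∑' n : ℤ, ENNReal.ofReal ((1 + (n : ℝ) ^ 2)⁻¹) := by
  rw [← (Equiv.subRight ⌊u⌋).tsum_eq, ← ENNReal.tsum_mul_left]
  refine ENNReal.tsum_le_tsum fun n => ?_
  have h3 : (3 : ENNReal) = ENNReal.ofReal 3 := by simp
  rw [h3, ← ENNReal.ofReal_mul (by norm_num)]
  apply ENNReal.ofReal_le_ofReal
  simp only [Equiv.subRight_apply, Int.cast_sub]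
  have hf : (n : ℝ) - ⌊u⌋ + u = n + Int.fract u := by
    have := Int.floor_add_fract u; linarith
  rw [hf, ← div_eq_mul_inv, inv_eq_one_div, div_le_div_iff₀ (by positivity) (by positivity)]
  have h0 := Int.fract_nonneg u
  have h1 := (Int.fract_lt_one u).le
  nlinarith [sq_nonneg ((n : ℝ) + 2 * Int.fract u)]

lemma sum_quad (x : ℝ) (q : ℤ) :
    ∑' n : ℤ, ENNReal.ofReal ((1 + (x - (n : ℝ) ^ 2 - ((n : ℝ) + (q : ℝ)) ^ 2) ^ 2)⁻¹) ≤
      12 * ∑' n : ℤ, ENNReal.ofReal ((1 + (n : ℝ) ^ 2)⁻¹) := by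
  set y := Real.sqrt ((x - (q : ℝ) ^ 2 / 2) / 2) with hy
  have hy0 : 0 ≤ y := Real.sqrt_nonneg _
  have key : ∀ n : ℤ, ENNReal.ofReal ((1 + (x - (n : ℝ) ^ 2 - ((n : ℝ) + (q : ℝ)) ^ 2) ^ 2)⁻¹) ≤
      2 * (ENNReal.ofReal ((1 + ((n : ℝ) + ((q : ℝ) / 2 - y)) ^ 2)⁻¹) +
        ENNReal.ofReal ((1 + ((n : ℝ) + ((q : ℝ) / 2 + y)) ^ 2)⁻¹)) := by
    intro n
    have h2 : (2 : ENNReal) = ENNReal.ofReal 2 := by simp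
    rw [h2, ← ENNReal.ofReal_add (by positivity) (by positivity), ← ENNReal.ofReal_mul (by norm_num)]
    apply ENNReal.ofReal_le_ofReal
    have aux : ∀ z t : ℝ, 2 * t ^ 2 ≤ |z| → (1 + z ^ 2)⁻¹ ≤ 2 * (1 + t ^ 2)⁻¹ := by
      intro z t h
      rw [← div_eq_mul_inv, inv_eq_one_div, div_le_div_iff₀ (by positivity) (by positivity)]
      have : (2 * t ^ 2) ^ 2 ≤ z ^ 2 := by
        rw [← sq_abs z]; exact pow_le_pow_left₀ (by positivity) h 2
      nlinarith [sq_nonneg (t ^ 2 - 1)]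
    set m := (n : ℝ) + (q : ℝ) / 2 with hm
    have e1 : (n : ℝ) + ((q : ℝ) / 2 - y) = m - y := by rw [hm]; ring
    have e2 : (n : ℝ) + ((q : ℝ) / 2 + y) = m + y := by rw [hm]; ring
    have e3 : x - (n : ℝ) ^ 2 - ((n : ℝ) + (q : ℝ)) ^ 2 = (x - (q : ℝ) ^ 2 / 2) - 2 * m ^ 2 := by
      rw [hm]; ring
    rw [e1, e2, e3]
    have p1 : 0 ≤ (1 + (m - y) ^ 2)⁻¹ := by positivity
    have p2 : 0 ≤ (1 + (m + y) ^ 2)⁻¹ := by positivity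
    rcases le_total (x - (q : ℝ) ^ 2 / 2) 0 with hd | hd
    · have : y = 0 := Real.sqrt_eq_zero_of_nonpos (by linarith)
      have h := aux ((x - (q : ℝ) ^ 2 / 2) - 2 * m ^ 2) (m - y) (by
        rw [this, abs_of_nonpos (by nlinarith [sq_nonneg m])]; nlinarith)
      linarith
    · have hyy : y ^ 2 = (x - (q : ℝ) ^ 2 / 2) / 2 := Real.sq_sqrt (by linarith)
      have e4 : (x - (q : ℝ) ^ 2 / 2) - 2 * m ^ 2 = 2 * ((y - m) * (y + m)) := by nlinarith
      rw [e4]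
      rcases le_total 0 m with h0 | h0
      · have h := aux (2 * ((y - m) * (y + m))) (m - y) (by
          rw [abs_mul, abs_mul, abs_two, ← sq_abs (m - y), abs_sub_comm y m]
          have : |m - y| ≤ |y + m| := by
            rw [abs_of_nonneg (by linarith : 0 ≤ y + m)]; rw [abs_le]; constructor <;> linarith
          nlinarith [abs_nonneg (m - y)])
        linarith
      · have h := aux (2 * ((y - m) * (y + m))) (m + y) (by
          rw [abs_mul, abs_mul, abs_two, ← sq_abs (m + y), add_comm y m]
          have : |m + y| ≤ |y - m| := by
            rw [abs_of_nonneg (by linarith : 0 ≤ y - m)]; rw [abs_le]; constructor <;> linarith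
          nlinarith [abs_nonneg (m + y)])
        linarith
  refine (ENNReal.tsum_le_tsum key).trans ?_
  rw [ENNReal.tsum_mul_left, ENNReal.tsum_add]
  calc _ ≤ 2 * (3 * ∑' n : ℤ, ENNReal.ofReal ((1 + (n : ℝ) ^ 2)⁻¹)
        + 3 * ∑' n : ℤ, ENNReal.ofReal ((1 + (n : ℝ) ^ 2)⁻¹)) := by
        gcongr <;> exact sum_shift _
    _ = _ := by ring

lemma summable_jb {β : ℝ} (hβ : 1 < β) : Summable fun n : ℤ => jb (n : ℝ) ^ (-β) := by
  refine Summable.of_norm_bounded_eventually (Real.summable_abs_int_rpow hβ) ?_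
  rw [Filter.eventually_cofinite]
  refine (Set.finite_singleton (0 : ℤ)).subset fun n hn => ?_
  by_contra h0
  apply hn
  have h0' : (n : ℝ) ≠ 0 := by exact_mod_cast h0
  rw [Real.norm_of_nonneg (Real.rpow_nonneg (jb_pos _).le _)]
  refine Real.rpow_le_rpow_of_nonpos (abs_pos.2 h0') ?_ (by linarith)
  unfold jb
  apply Real.abs_le_sqrt
  linarith

lemma sum_fin : ∑' n : ℤ, ENNReal.ofReal ((1 + (n : ℝ) ^ 2)⁻¹) ≠ ⊤ := by
  have h := (summable_jb (β := 2) (by norm_num)).tsum_ofReal_ne_top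
  convert h using 5 with n
  rw [Real.rpow_neg (jb_pos _).le, ← jb_sq]
  norm_cast

lemma cs_tsum (P K : ℤ → ENNReal) :
    (∑' n, P n * K n) ^ 2 ≤ (∑' n, P n ^ 2 * K n) * ∑' n, K n := by
  have h := ENNReal.lintegral_mul_norm_pow_le (μ := (Measure.count : Measure ℤ))
    (f := fun n => P n ^ 2 * K n) (g := K) (p := 1 / 2) (q := 1 / 2)
    (measurable_of_countable _).aemeasurable (measurable_of_countable _).aemeasurable
    (by norm_num) (by norm_num) (by norm_num)
  simp only [lintegral_count] at h
  have e : ∀ n, (P n ^ 2 * K n) ^ (1 / 2 : ℝ) * K n ^ (1 / 2 : ℝ) = P n * K n := by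
    intro n
    rw [← ENNReal.mul_rpow_of_nonneg _ _ (by norm_num)]
    have : P n ^ 2 * K n * K n = (P n * K n) ^ (2 : ℝ) := by
      rw [ENNReal.rpow_two]; ring
    rw [this, ← ENNReal.rpow_mul]; norm_num
  simp only [e] at h
  rw [← ENNReal.mul_rpow_of_nonneg _ _ (by norm_num)] at h
  calc _ ≤ (((∑' n, P n ^ 2 * K n) * ∑' n, K n) ^ (1 / 2 : ℝ)) ^ 2 := by gcongr
    _ = _ := by
      rw [← ENNReal.rpow_two, ← ENNReal.rpow_mul]; norm_num

lemma peetre {e : ℝ} (he : -1 ≤ e) (he0 : e ≤ 0) (u v : ℝ) :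
    jb u ^ e ≤ 2 * (1 + (u - v) ^ 2) * jb v ^ e := by
  have hu := jb_pos u
  have hv := jb_pos v
  have h1 : jb v ≤ jb u * (2 * (1 + (u - v) ^ 2)) := by
    apply le_of_sq_le_sq _ (by positivity)
    rw [mul_pow, jb_sq, jb_sq]
    nlinarith [sq_nonneg (u - v), sq_nonneg (2 * u - v), sq_nonneg u, mul_nonneg (sq_nonneg u) (sq_nonneg (u - v)), sq_nonneg ((u-v)^2), mul_nonneg (sq_nonneg u) (sq_nonneg ((u - v)^2))]
  have h2 : jb v ^ (-e) ≤ jb u ^ (-e) * (2 * (1 + (u - v) ^ 2)) := by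
    calc jb v ^ (-e) ≤ (jb u * (2 * (1 + (u - v) ^ 2))) ^ (-e) :=
          Real.rpow_le_rpow hv.le h1 (by linarith)
      _ = jb u ^ (-e) * (2 * (1 + (u - v) ^ 2)) ^ (-e) := Real.mul_rpow hu.le (by positivity)
      _ ≤ _ := by
        gcongr
        calc _ ≤ (2 * (1 + (u - v) ^ 2)) ^ (1 : ℝ) :=
              Real.rpow_le_rpow_of_exponent_le (by nlinarith [sq_nonneg (u - v)]) (by linarith)
          _ = _ := Real.rpow_one _
  rw [Real.rpow_neg hv.le, Real.rpow_neg hu.le] at h2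
  have pu := Real.rpow_pos_of_pos hu e
  have pv := Real.rpow_pos_of_pos hv e
  rw [inv_mul_eq_div, inv_eq_one_div, div_le_div_iff₀ pv pu] at h2
  linarith

lemma weight_int {e : ℝ} (he : -1 ≤ e) (he0 : e ≤ 0) (c M : ℝ) :
    ∫⁻ τ : ℝ, ENNReal.ofReal (jb (τ + c) ^ e) * ENNReal.ofReal (((1 + (τ - M) ^ 2)⁻¹) ^ 2) ≤
      2 * (∫⁻ τ : ℝ, ENNReal.ofReal ((1 + τ ^ 2)⁻¹)) * ENNReal.ofReal (jb (M + c) ^ e) := by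
  rw [← lintegral_sub_right_eq_self (fun τ : ℝ => ENNReal.ofReal ((1 + τ ^ 2)⁻¹)) M, mul_comm,
    ← mul_assoc, ← lintegral_const_mul _ (by fun_prop)]
  refine lintegral_mono fun τ => ?_
  have h2 : (2 : ENNReal) = ENNReal.ofReal 2 := by simp
  have hj : 0 ≤ jb (M + c) ^ e := Real.rpow_nonneg (jb_pos _).le _
  have hj' : 0 ≤ jb (τ + c) ^ e := Real.rpow_nonneg (jb_pos _).le _
  rw [h2, ← ENNReal.ofReal_mul hj', ← ENNReal.ofReal_mul hj, ← ENNReal.ofReal_mul (by positivity)]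
  apply ENNReal.ofReal_le_ofReal
  have := peetre he he0 (τ + c) (M + c)
  rw [show τ + c - (M + c) = τ - M by ring] at this
  rw [inv_pow, ← div_eq_mul_inv, ← div_eq_mul_inv, div_le_div_iff₀ (by positivity) (by positivity)]
  have hz : 0 < 1 + (τ - M) ^ 2 := by positivity
  nlinarith [mul_le_mul_of_nonneg_right this hz.le]

lemma holder3 (X W : ℤ → ENNReal) {x y : ℝ} (hx : 0 ≤ x) (hy : 0 ≤ y) (hxy : x + y + y = 1) :
    ∑' q : ℤ, ∑' n : ℤ, (X n * X (-n - q)) ^ x * (X n * W q) ^ y * (X (-n - q) * W q) ^ y ≤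
      ((∑' n, X n) * ∑' n, X n) ^ x * ((∑' n, X n) * ∑' n, W n) ^ y *
        ((∑' n, X n) * ∑' n, W n) ^ y := by
  have h := ENNReal.lintegral_prod_norm_pow_le (μ := (Measure.count : Measure (ℤ × ℤ)))
    (Finset.univ : Finset (Fin 3))
    (f := ![fun z => X z.2 * X (-z.2 - z.1), fun z => X z.2 * W z.1, fun z => X (-z.2 - z.1) * W z.1])
    (p := ![x, y, y]) (fun i _ => (measurable_of_countable _).aemeasurable)
    (by simp [Fin.sum_univ_three, hxy]) (by intro i _; fin_cases i <;> simp [hx, hy])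
  simp only [lintegral_count, Fin.prod_univ_three] at h
  simp only [Matrix.cons_val_zero, Matrix.cons_val_one, Matrix.cons_val] at h
  rw [ENNReal.tsum_prod (f := fun q n => (X n * X (-n - q)) ^ x * (X n * W q) ^ y * (X (-n - q) * W q) ^ y),
    ENNReal.tsum_prod (f := fun q n => X n * X (-n - q)),
    ENNReal.tsum_prod (f := fun q n => X n * W q),
    ENNReal.tsum_prod (f := fun q n => X (-n - q) * W q)] at h
  have e1 : ∑' (q : ℤ) (n : ℤ), X n * X (-n - q) = (∑' n, X n) * ∑' n, X n := by
    rw [ENNReal.tsum_comm, ← ENNReal.tsum_mul_right]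
    refine tsum_congr fun n => ?_
    rw [ENNReal.tsum_mul_left, (Equiv.subLeft (-n)).tsum_eq X |>.symm]
    rfl
  have e2 : ∑' (q : ℤ) (n : ℤ), X n * W q = (∑' n, X n) * ∑' n, W n := by
    simp_rw [ENNReal.tsum_mul_right, ENNReal.tsum_mul_left]
  have e3 : ∑' (q : ℤ) (n : ℤ), X (-n - q) * W q = (∑' n, X n) * ∑' n, W n := by
    simp_rw [ENNReal.tsum_mul_right]
    rw [← ENNReal.tsum_mul_left]
    refine tsum_congr fun q => ?_
    congr 1
    rw [(Equiv.subLeft (-q)).tsum_eq X |>.symm]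
    refine tsum_congr fun n => ?_
    rw [Equiv.subLeft_apply]; congr 1; ring
  rwa [e1, e2, e3] at h

lemma term_bound {s₀ p s b β : ℝ} (hs₀u : s₀ ≤ 0)
    (hp2 : 2 ≤ p) (hp4 : p ≤ 4) (hb : b ≤ 1 + s₀)
    (hβ : (1 - 2 / p) * β ≤ -s) (α : ℤ → ℂ) (q n k : ℤ) (hk : k = -n - q) :
    jb (q : ℝ) ^ (2 * s) * ((‖α n‖ * ‖α k‖) ^ 2 *
        jb ((n : ℝ) ^ 2 + ((n : ℝ) + (q : ℝ)) ^ 2 + (q : ℝ) ^ 2) ^ (2 * (b - 1))) ≤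
      ((jb (n : ℝ) ^ (s₀ * p) * ‖α n‖ ^ p) * (jb (k : ℝ) ^ (s₀ * p) * ‖α k‖ ^ p)) ^ (4 / p - 1) *
      ((jb (n : ℝ) ^ (s₀ * p) * ‖α n‖ ^ p) * jb (q : ℝ) ^ (-β)) ^ (1 - 2 / p) *
      ((jb (k : ℝ) ^ (s₀ * p) * ‖α k‖ ^ p) * jb (q : ℝ) ^ (-β)) ^ (1 - 2 / p) := by
  have hp : 0 < p := by linarith
  have hx : 0 ≤ 4 / p - 1 := by rw [sub_nonneg, le_div_iff₀ hp]; linarith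
  have hy : 0 ≤ 1 - 2 / p := by rw [sub_nonneg, div_le_iff₀ hp]; linarith
  have key : ∀ m : ℤ, (jb (m : ℝ) ^ (s₀ * p) * ‖α m‖ ^ p) ^ (4 / p - 1) *
      (jb (m : ℝ) ^ (s₀ * p) * ‖α m‖ ^ p) ^ (1 - 2 / p) = jb (m : ℝ) ^ (2 * s₀) * ‖α m‖ ^ 2 := by
    intro m
    have hj := jb_pos (m : ℝ)
    rw [← Real.rpow_add_of_nonneg (by positivity) hx hy,
      show 4 / p - 1 + (1 - 2 / p) = 2 / p by ring,
      Real.mul_rpow (by positivity) (by positivity), ← Real.rpow_mul hj.le,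
      ← Real.rpow_mul (norm_nonneg _), show s₀ * p * (2 / p) = 2 * s₀ by field_simp,
      show p * (2 / p) = 2 by field_simp, Real.rpow_two]
  have hjn := jb_pos (n : ℝ)
  have hjk := jb_pos (k : ℝ)
  have hjq := jb_pos (q : ℝ)
  have hX0 : ∀ k : ℤ, 0 ≤ jb (k : ℝ) ^ (s₀ * p) * ‖α k‖ ^ p := fun k =>
    mul_nonneg (Real.rpow_nonneg (jb_pos _).le _) (Real.rpow_nonneg (norm_nonneg _) _)
  have hW : jb (q : ℝ) ^ (2 * s) ≤
      (jb (q : ℝ) ^ (-β)) ^ (1 - 2 / p) * (jb (q : ℝ) ^ (-β)) ^ (1 - 2 / p) := by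
    rw [← Real.rpow_mul hjq.le, ← Real.rpow_add hjq]
    exact Real.rpow_le_rpow_of_exponent_le (jb_one_le _) (by linarith)
  have hM : jb ((n : ℝ) ^ 2 + ((n : ℝ) + (q : ℝ)) ^ 2 + (q : ℝ) ^ 2) ^ (2 * (b - 1)) ≤
      jb (n : ℝ) ^ (2 * s₀) * jb (k : ℝ) ^ (2 * s₀) := by
    have hkk : (n : ℝ) + q = -k := by rw [hk]; push_cast; ring
    rw [hkk, ← Real.mul_rpow hjn.le hjk.le]
    have isq : ∀ m : ℤ, (m : ℝ) ^ 2 ≤ ((m : ℝ) ^ 2) ^ 2 := by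
      intro m
      have : m ^ 2 ≤ (m ^ 2) ^ 2 := Int.le_self_sq _
      exact_mod_cast this
    have hle : jb (n : ℝ) * jb (k : ℝ) ≤ jb ((n : ℝ) ^ 2 + (-(k : ℝ)) ^ 2 + (q : ℝ) ^ 2) := by
      apply le_of_sq_le_sq _ (jb_pos _).le
      rw [mul_pow, jb_sq, jb_sq, jb_sq]
      nlinarith [isq n, isq k, sq_nonneg (n : ℝ), sq_nonneg (k : ℝ), sq_nonneg (q : ℝ),
        mul_nonneg (sq_nonneg (n : ℝ)) (sq_nonneg (q : ℝ)),
        mul_nonneg (sq_nonneg (k : ℝ)) (sq_nonneg (q : ℝ)), sq_nonneg ((q : ℝ) ^ 2),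
        mul_nonneg (sq_nonneg (n : ℝ)) (sq_nonneg (k : ℝ))]
    calc _ ≤ jb ((n : ℝ) ^ 2 + (-(k : ℝ)) ^ 2 + (q : ℝ) ^ 2) ^ (2 * s₀) :=
          Real.rpow_le_rpow_of_exponent_le (jb_one_le _) (by linarith)
      _ ≤ _ := Real.rpow_le_rpow_of_nonpos (by positivity) hle (by linarith)
  have hjM := jb_pos ((n : ℝ) ^ 2 + ((n : ℝ) + (q : ℝ)) ^ 2 + (q : ℝ) ^ 2)
  rw [Real.mul_rpow (hX0 n) (hX0 k), Real.mul_rpow (hX0 n) (Real.rpow_nonneg hjq.le _),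
    Real.mul_rpow (hX0 k) (Real.rpow_nonneg hjq.le _)]
  have kn := key n
  have kk := key k
  set A := (jb (n : ℝ) ^ (s₀ * p) * ‖α n‖ ^ p) ^ (4 / p - 1)
  set A' := (jb (n : ℝ) ^ (s₀ * p) * ‖α n‖ ^ p) ^ (1 - 2 / p)
  set B := (jb (k : ℝ) ^ (s₀ * p) * ‖α k‖ ^ p) ^ (4 / p - 1)
  set B' := (jb (k : ℝ) ^ (s₀ * p) * ‖α k‖ ^ p) ^ (1 - 2 / p)
  set w := (jb (q : ℝ) ^ (-β)) ^ (1 - 2 / p)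
  calc _ ≤ (w * w) * ((‖α n‖ * ‖α k‖) ^ 2 * (jb (n : ℝ) ^ (2 * s₀) * jb (k : ℝ) ^ (2 * s₀))) := by
        gcongr
    _ = (w * w) * ((A * A') * (B * B')) := by rw [kn, kk]; ring
    _ = _ := by ring

/-- the first Picard iterate estimate `‖u₁‖_{X^{s,b}} ≲ ‖f‖²_{𝓗^{s₀,p}}`
at the level of Fourier coefficients. -/
theorem stmt0 (s₀ p s : ℝ) (hs₀l : -(1 / 2) < s₀) (hs₀u : s₀ ≤ 0)
    (hp2 : 2 ≤ p) (hp4 : p ≤ 4) (hsu : s ≤ 0) (hs : s < -1 + 2 / p) :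
    ∃ b₁ : ℝ, 1 / 2 < b₁ ∧ ∀ b : ℝ, 1 / 2 < b → b < b₁ →
      ∀ ψ : SchwartzMap ℝ ℂ, ∃ C : ℝ, 0 < C ∧
        ∀ α : ℤ → ℂ, Summable (fun k : ℤ => jb (k : ℝ) ^ (s₀ * p) * ‖α k‖ ^ p) →
          (∑' q : ℤ, ∫ τ : ℝ,
              jb (τ + (q : ℝ) ^ 2) ^ (2 * (b - 1)) * jb (q : ℝ) ^ (2 * s) *
                ‖∑' n : ℤ, (starRingEnd ℂ) (α n) * (starRingEnd ℂ) (α (-n - q)) *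
                    ft (⇑ψ) (τ - (n : ℝ) ^ 2 - ((n : ℝ) + (q : ℝ)) ^ 2)‖ ^ 2)
            ≤ C * (∑' k : ℤ, jb (k : ℝ) ^ (s₀ * p) * ‖α k‖ ^ p) ^ (4 / p) := by
  refine ⟨1 + s₀, by linarith, fun b hb1 hb2 ψ => ?_⟩
  obtain ⟨D, hD, hft⟩ := ft_decay ψ
  have hp : 0 < p := by linarith
  have hx : 0 ≤ 4 / p - 1 := by rw [sub_nonneg, le_div_iff₀ hp]; linarith
  have hy : 0 ≤ 1 - 2 / p := by rw [sub_nonneg, div_le_iff₀ hp]; linarith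
  have h2p : 0 < 2 / p := by positivity
  obtain ⟨β, hβ1, hβ⟩ : ∃ β : ℝ, 1 < β ∧ (1 - 2 / p) * β ≤ -s :=
    ⟨1 + (-s - (1 - 2 / p)), by linarith, by nlinarith⟩
  set B : ENNReal := 12 * ∑' n : ℤ, ENNReal.ofReal ((1 + (n : ℝ) ^ 2)⁻¹) with hB
  set I : ENNReal := 2 * (∫⁻ τ : ℝ, ENNReal.ofReal ((1 + τ ^ 2)⁻¹)) with hI
  set ω : ENNReal := ∑' n : ℤ, ENNReal.ofReal (jb (n : ℝ) ^ (-β)) with hω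
  have hBt : B ≠ ⊤ := ENNReal.mul_ne_top (by simp) sum_fin
  have hIt : I ≠ ⊤ := ENNReal.mul_ne_top (by simp) integrable_inv_one_add_sq.lintegral_lt_top.ne
  have hωt : ω ≠ ⊤ := (summable_jb hβ1).tsum_ofReal_ne_top
  set E : ENNReal := ENNReal.ofReal D ^ 2 * B * I * (ω ^ (1 - 2 / p) * ω ^ (1 - 2 / p)) with hE
  have hEt : E ≠ ⊤ := by
    have := ENNReal.rpow_ne_top_of_nonneg hy hωt
    exact ENNReal.mul_ne_top (ENNReal.mul_ne_top (ENNReal.mul_ne_top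
      (ENNReal.pow_ne_top ENNReal.ofReal_ne_top) hBt) hIt) (ENNReal.mul_ne_top this this)
  refine ⟨E.toReal + 1, by positivity, fun α hα => ?_⟩
  set X : ℤ → ENNReal := fun k => ENNReal.ofReal (jb (k : ℝ) ^ (s₀ * p) * ‖α k‖ ^ p) with hX
  have hX0 : ∀ k : ℤ, 0 ≤ jb (k : ℝ) ^ (s₀ * p) * ‖α k‖ ^ p := fun k =>
    mul_nonneg (Real.rpow_nonneg (jb_pos _).le _) (Real.rpow_nonneg (norm_nonneg _) _)
  set S : ℝ := ∑' k : ℤ, jb (k : ℝ) ^ (s₀ * p) * ‖α k‖ ^ p with hS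
  have hS0 : 0 ≤ S := tsum_nonneg hX0
  have hXS : ∑' k, X k = ENNReal.ofReal S := (ENNReal.ofReal_tsum_of_nonneg hX0 hα).symm
  -- bound for each `q`
  have hq : ∀ q : ℤ, ‖∫ τ : ℝ,
              jb (τ + (q : ℝ) ^ 2) ^ (2 * (b - 1)) * jb (q : ℝ) ^ (2 * s) *
                ‖∑' n : ℤ, (starRingEnd ℂ) (α n) * (starRingEnd ℂ) (α (-n - q)) *
                    ft (⇑ψ) (τ - (n : ℝ) ^ 2 - ((n : ℝ) + (q : ℝ)) ^ 2)‖ ^ 2‖ₑ ≤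
      ENNReal.ofReal D ^ 2 * B * I * ∑' n : ℤ,
        (X n * X (-n - q)) ^ (4 / p - 1) * (X n * ENNReal.ofReal (jb (q : ℝ) ^ (-β))) ^ (1 - 2 / p) *
          (X (-n - q) * ENNReal.ofReal (jb (q : ℝ) ^ (-β))) ^ (1 - 2 / p) := by
    intro q
    set P : ℤ → ENNReal := fun n => ENNReal.ofReal (‖α n‖ * ‖α (-n - q)‖) with hP
    set w : ENNReal := ENNReal.ofReal (jb (q : ℝ) ^ (2 * s)) with hw
    set K : ℤ → ℝ → ENNReal := fun n τ =>
      ENNReal.ofReal (((1 + (τ - ((n : ℝ) ^ 2 + ((n : ℝ) + (q : ℝ)) ^ 2)) ^ 2)⁻¹) ^ 2) with hK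
    have hjm : Measurable fun τ : ℝ => ENNReal.ofReal (jb (τ + (q : ℝ) ^ 2) ^ (2 * (b - 1))) := by
      unfold jb; fun_prop
    have hKm : ∀ n, Measurable (K n) := fun n => by simp only [hK]; fun_prop
    have hJK : ∀ n, Measurable fun τ : ℝ =>
        ENNReal.ofReal (jb (τ + (q : ℝ) ^ 2) ^ (2 * (b - 1))) * K n τ := fun n => hjm.mul (hKm n)
    have hPJK : ∀ n, Measurable fun τ : ℝ => P n ^ 2 *
        (ENNReal.ofReal (jb (τ + (q : ℝ) ^ 2) ^ (2 * (b - 1))) * K n τ) := fun n =>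
      (hJK n).const_mul _
    have pt : ∀ τ : ℝ, ‖jb (τ + (q : ℝ) ^ 2) ^ (2 * (b - 1)) * jb (q : ℝ) ^ (2 * s) *
                ‖∑' n : ℤ, (starRingEnd ℂ) (α n) * (starRingEnd ℂ) (α (-n - q)) *
                    ft (⇑ψ) (τ - (n : ℝ) ^ 2 - ((n : ℝ) + (q : ℝ)) ^ 2)‖ ^ 2‖ₑ ≤
        (ENNReal.ofReal D ^ 2 * B * w) * ∑' n : ℤ, P n ^ 2 *
          (ENNReal.ofReal (jb (τ + (q : ℝ) ^ 2) ^ (2 * (b - 1))) * K n τ) := by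
      intro τ
      have h1 : ‖∑' n : ℤ, (starRingEnd ℂ) (α n) * (starRingEnd ℂ) (α (-n - q)) *
                    ft (⇑ψ) (τ - (n : ℝ) ^ 2 - ((n : ℝ) + (q : ℝ)) ^ 2)‖ₑ ≤
          ENNReal.ofReal D * ∑' n, P n * K n τ := by
        refine enorm_tsum_le_tsum_enorm.trans ?_
        rw [← ENNReal.tsum_mul_left]
        refine ENNReal.tsum_le_tsum fun n => ?_
        rw [← ofReal_norm, norm_mul, norm_mul, RCLike.norm_conj, RCLike.norm_conj]
        simp only [hP, hK]
        rw [← ENNReal.ofReal_mul (by positivity), ← ENNReal.ofReal_mul hD.le]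
        apply ENNReal.ofReal_le_ofReal
        have := hft (τ - (n : ℝ) ^ 2 - ((n : ℝ) + (q : ℝ)) ^ 2)
        rw [sub_sub] at this ⊢
        calc _ ≤ _ := mul_le_mul_of_nonneg_left this (by positivity)
          _ = _ := by ring
      have h2 : ∑' n, K n τ ≤ B := by
        refine le_trans (ENNReal.tsum_le_tsum fun n => ?_) (sum_quad τ q)
        simp only [hK]
        apply ENNReal.ofReal_le_ofReal
        rw [sub_sub]
        exact pow_le_of_le_one (by positivity) (inv_le_one_of_one_le₀ (by nlinarith [sq_nonneg (τ - ((n : ℝ) ^ 2 + ((n : ℝ) + (q : ℝ)) ^ 2))])) (by norm_num)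
      have h3 := cs_tsum P (fun n => K n τ)
      have hj1 : 0 ≤ jb (τ + (q : ℝ) ^ 2) ^ (2 * (b - 1)) := Real.rpow_nonneg (jb_pos _).le _
      have hj2 : 0 ≤ jb (q : ℝ) ^ (2 * s) := Real.rpow_nonneg (jb_pos _).le _
      rw [enorm_mul, enorm_mul, enorm_pow, enorm_norm, Real.enorm_of_nonneg hj1,
        Real.enorm_of_nonneg hj2]
      calc _ ≤ ENNReal.ofReal (jb (τ + (q : ℝ) ^ 2) ^ (2 * (b - 1))) * w *
            (ENNReal.ofReal D * ∑' n, P n * K n τ) ^ 2 := by gcongr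
        _ = ENNReal.ofReal (jb (τ + (q : ℝ) ^ 2) ^ (2 * (b - 1))) * w * ENNReal.ofReal D ^ 2 *
            (∑' n, P n * K n τ) ^ 2 := by ring
        _ ≤ ENNReal.ofReal (jb (τ + (q : ℝ) ^ 2) ^ (2 * (b - 1))) * w * ENNReal.ofReal D ^ 2 *
            ((∑' n, P n ^ 2 * K n τ) * B) := by
              gcongr
              exact h3.trans (by gcongr)
        _ = (ENNReal.ofReal D ^ 2 * B * w) * (ENNReal.ofReal (jb (τ + (q : ℝ) ^ 2) ^ (2 * (b - 1))) *
            ∑' n, P n ^ 2 * K n τ) := by ring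
        _ = _ := by
          rw [← ENNReal.tsum_mul_left]
          congr 1
          refine tsum_congr fun n => ?_
          ring
    refine (enorm_integral_le_lintegral_enorm _).trans ((lintegral_mono pt).trans ?_)
    rw [lintegral_const_mul _ (Measurable.ennreal_tsum hPJK),
      lintegral_tsum fun n => (hPJK n).aemeasurable]
    calc _ ≤ (ENNReal.ofReal D ^ 2 * B * w) * ∑' n : ℤ, P n ^ 2 *
          (I * ENNReal.ofReal (jb ((n : ℝ) ^ 2 + ((n : ℝ) + (q : ℝ)) ^ 2 + (q : ℝ) ^ 2) ^ (2 * (b - 1)))) := by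
          gcongr with n
          rw [lintegral_const_mul _ (hJK n)]
          gcongr
          exact weight_int (by linarith) (by linarith) _ _
      _ = ENNReal.ofReal D ^ 2 * B * I * ∑' n : ℤ, w * (P n ^ 2 *
          ENNReal.ofReal (jb ((n : ℝ) ^ 2 + ((n : ℝ) + (q : ℝ)) ^ 2 + (q : ℝ) ^ 2) ^ (2 * (b - 1)))) := by
          rw [← ENNReal.tsum_mul_left, ← ENNReal.tsum_mul_left]
          refine tsum_congr fun n => ?_
          ring
      _ ≤ _ := by
          refine mul_le_mul_right (ENNReal.tsum_le_tsum fun n => ?_) _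
          have hb0 : 0 ≤ jb (q : ℝ) ^ (-β) := Real.rpow_nonneg (jb_pos _).le _
          have hj2 : 0 ≤ jb (q : ℝ) ^ (2 * s) := Real.rpow_nonneg (jb_pos _).le _
          have t := ENNReal.ofReal_le_ofReal
            (term_bound hs₀u hp2 hp4 hb2.le hβ α q n (-n - q) rfl)
          have u1 := mul_nonneg (hX0 n) (hX0 (-n - q))
          have u2 := mul_nonneg (hX0 n) hb0
          have u3 := mul_nonneg (hX0 (-n - q)) hb0
          rw [ENNReal.ofReal_mul hj2, ENNReal.ofReal_mul (by positivity), ENNReal.ofReal_pow (by positivity),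
            ENNReal.ofReal_mul (mul_nonneg (Real.rpow_nonneg u1 _) (Real.rpow_nonneg u2 _)),
            ENNReal.ofReal_mul (Real.rpow_nonneg u1 _),
            ← ENNReal.ofReal_rpow_of_nonneg u1 hx, ← ENNReal.ofReal_rpow_of_nonneg u2 hy,
            ← ENNReal.ofReal_rpow_of_nonneg u3 hy, ENNReal.ofReal_mul (hX0 n),
            ENNReal.ofReal_mul (hX0 n), ENNReal.ofReal_mul (hX0 (-n - q))] at t
          exact t
  have main := (enorm_tsum_le_tsum_enorm).trans (ENNReal.tsum_le_tsum hq)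
  rw [ENNReal.tsum_mul_left] at main
  have h3 := holder3 X (fun q => ENNReal.ofReal (jb (q : ℝ) ^ (-β))) hx hy (by ring)
  have main2 := main.trans (mul_le_mul_right h3 _)
  rw [hXS, ← hω] at main2
  have fin : ENNReal.ofReal D ^ 2 * B * I * ((ENNReal.ofReal S * ENNReal.ofReal S) ^ (4 / p - 1) *
      (ENNReal.ofReal S * ω) ^ (1 - 2 / p) * (ENNReal.ofReal S * ω) ^ (1 - 2 / p)) =
      E * ENNReal.ofReal (S ^ (4 / p)) := by
    rw [ENNReal.mul_rpow_of_nonneg _ _ hx, ENNReal.mul_rpow_of_nonneg _ _ hy,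
      ← ENNReal.ofReal_rpow_of_nonneg hS0 (by positivity : 0 ≤ 4 / p),
      show 4 / p = (4 / p - 1) + (4 / p - 1) + ((1 - 2 / p) + (1 - 2 / p)) by ring,
      ENNReal.rpow_add_of_nonneg _ _ (by positivity) (by positivity),
      ENNReal.rpow_add_of_nonneg _ _ hx hx, ENNReal.rpow_add_of_nonneg _ _ hy hy, hE]
    rw [show (4 / p - 1) + (4 / p - 1) + ((1 - 2 / p) + (1 - 2 / p)) - 1 = 4 / p - 1 by ring]
    ring
  rw [fin] at main2
  have hr := ENNReal.toReal_mono (ENNReal.mul_ne_top hEt ENNReal.ofReal_ne_top) main2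
  have hSp : 0 ≤ S ^ (4 / p) := Real.rpow_nonneg hS0 _
  rw [toReal_enorm, ENNReal.toReal_mul, ENNReal.toReal_ofReal hSp] at hr
  exact (Real.le_norm_self _).trans (hr.trans (by nlinarith))
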